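/- For every positive integer n, Σ_{μ ⊢ n} f_μ · q^{n(μ)}·[n]_q!/∏_{(i,j)∈μ}[h_{ij}]_q = [n]_q!, where f_μ = n!/∏ h_{ij} is the number of standard Young tableaux of shape μ. -/

import Mathlib

noncomputable section

/-- The rational function `q`. -/
def qq : RatFunc ℚ := RatFunc.X

/-- `[k]_q = 1 + q + ⋯ + q^{k−1}` in `ℚ(q)`. -/
def qInt (k : ℕ) : RatFunc ℚ := ∑ i ∈ Finset.range k, qq ^ i

/-- `[n]_q! = [1]_q [2]_q ⋯ [n]_q`. -/
def qFact (n : ℕ) : RatFunc ℚ := ∏ k ∈ Finset.range n, qInt (k + 1)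

/-- The hook length of the cell `c = (i,j)` of the Young diagram `μ`. -/
def hookLength (μ : YoungDiagram) (c : ℕ × ℕ) : ℕ :=
  μ.rowLen c.1 + μ.colLen c.2 - (c.1 + c.2 + 1)

/-- `n(μ) = Σ_i (i−1)·μ_i`, the sum over all cells of the (0-indexed) row index. -/
def nStat (μ : YoungDiagram) : ℕ := ∑ c ∈ μ.cells, c.1

/-- The number `f_μ = n!/∏_{(i,j)∈μ} h_{ij}(μ)` of standard Young tableaux of shape `μ`
(hook length formula), as an element of `ℚ(q)`. -/
def fSYT (n : ℕ) (μ : YoungDiagram) : RatFunc ℚ :=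
  (n.factorial : RatFunc ℚ) / ∏ c ∈ μ.cells, (hookLength μ c : RatFunc ℚ)

section alg
variable {K : Type*} [Field K] {ι : Type*} [DecidableEq ι]

open Polynomial in
lemma lagr (s : Finset ι) (v : ι → K) (hv : Set.InjOn v s) (P : K[X]) (hP : P.degree < s.card) (y : K) :
    P.eval y = ∑ i ∈ s, P.eval (v i) * ∏ j ∈ s.erase i, ((y - v j) / (v i - v j)) := by
  have h := Lagrange.eq_interpolate_of_eval_eq (fun i => P.eval (v i)) hv hP (fun i _ => rfl)
  conv_lhs => rw [h]
  rw [Lagrange.interpolate_apply, eval_finsetSum]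
  refine Finset.sum_congr rfl fun i hi => ?_
  rw [eval_mul, eval_C, Lagrange.basis, eval_prod]
  congr 1
  refine Finset.prod_congr rfl fun j hj => ?_
  simp [Lagrange.basisDivisor]
  ring

/-- partial fractions -/
lemma pfrac (s : Finset ι) (v : ι → K) (hv : Set.InjOn v s) (y : K) (hy : ∀ i ∈ s, v i ≠ y) :
    ∑ i ∈ s, (∏ j ∈ s.erase i, ((v i - 1 - v j) / (v i - v j))) / (v i - y)
      = ∏ j ∈ s, ((y - 1 - v j) / (y - v j)) - 1 := by
  classical
  let P : Polynomial K := ∏ j ∈ s, (Polynomial.X - Polynomial.C (v j + 1))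
    - ∏ j ∈ s, (Polynomial.X - Polynomial.C (v j))
  have hP : P.degree < s.card := by
    have h1 : (∏ j ∈ s, (Polynomial.X - Polynomial.C (v j + 1))).degree = (s.card : WithBot ℕ) := by
      rw [Polynomial.degree_prod]; simp only [Polynomial.degree_X_sub_C]; simp
    have h2 : (∏ j ∈ s, (Polynomial.X - Polynomial.C (v j))).degree = (s.card : WithBot ℕ) := by
      rw [Polynomial.degree_prod]; simp only [Polynomial.degree_X_sub_C]; simp
    have m1 : (∏ j ∈ s, (Polynomial.X - Polynomial.C (v j + 1))).Monic :=
      Polynomial.monic_prod_of_monic _ _ fun j _ => Polynomial.monic_X_sub_C _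
    have m2 : (∏ j ∈ s, (Polynomial.X - Polynomial.C (v j))).Monic :=
      Polynomial.monic_prod_of_monic _ _ fun j _ => Polynomial.monic_X_sub_C _
    rw [← h1]
    exact Polynomial.degree_sub_lt_left (h1.trans h2.symm) m1.ne_zero (by rw [m1.leadingCoeff, m2.leadingCoeff])
  have h := lagr s v hv P hP y
  have e1 : ∀ z, P.eval z = ∏ j ∈ s, (z - 1 - v j) - ∏ j ∈ s, (z - v j) := by
    intro z
    simp only [P, Polynomial.eval_sub, Polynomial.eval_prod, Polynomial.eval_X, Polynomial.eval_C]
    congr 1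
    exact Finset.prod_congr rfl fun j _ => by ring
  have e2 : ∀ i ∈ s, P.eval (v i) = - ∏ j ∈ s.erase i, (v i - 1 - v j) := by
    intro i hi
    rw [e1, Finset.prod_eq_zero (i := i) (s := s) (f := fun j => v i - v j) hi (sub_self _),
      ← Finset.mul_prod_erase s _ hi]
    ring
  have hne : ∀ j ∈ s, y - v j ≠ 0 := fun j hj => sub_ne_zero.2 (hy j hj).symm
  have hN : ∏ j ∈ s, (y - v j) ≠ 0 := Finset.prod_ne_zero_iff.2 hne
  rw [Finset.prod_div_distrib, div_sub_one hN, ← e1, h, eq_div_iff hN, Finset.sum_mul]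
  refine Finset.sum_congr rfl fun i hi => ?_
  rw [e2 i hi, ← Finset.mul_prod_erase s _ hi, Finset.prod_div_distrib, Finset.prod_div_distrib]
  have := hne i hi
  have h3 : v i - y ≠ 0 := sub_ne_zero.2 (hy i hi)
  have h4 : y - v i = -(v i - y) := by ring
  rw [h4]
  field_simp

lemma down_aux (s : Finset ι) (v : ι → K) (hv : Set.InjOn v s) :
    (∑ i ∈ s, ∏ j ∈ s.erase i, ((v i - 1 - v j) / (v i - v j)) = s.card) ∧
    (∑ i ∈ s, v i * ∏ j ∈ s.erase i, ((v i - 1 - v j) / (v i - v j))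
      = ∑ i ∈ s, v i - ∑ t ∈ Finset.range s.card, (t : K)) := by
  induction s using Finset.induction_on with
  | empty => simp
  | insert a s ha ih =>
    have hv' : Set.InjOn v s := hv.mono (by simp)
    have hy : ∀ i ∈ s, v i ≠ v a := fun i hi h => ha (by
      have := hv (by simp [hi]) (by simp) h
      exact this ▸ hi)
    obtain ⟨i1, i2⟩ := ih hv'
    have pf := pfrac s v hv' (v a) hy
    set w : ι → K := fun i => ∏ j ∈ s.erase i, ((v i - 1 - v j) / (v i - v j)) with hw
    have hwi : ∀ i ∈ s, ∏ j ∈ (insert a s).erase i, ((v i - 1 - v j) / (v i - v j))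
        = w i - w i / (v i - v a) := by
      intro i hi
      have hia : a ≠ i := fun h => ha (h ▸ hi)
      rw [Finset.erase_insert_of_ne hia, Finset.prod_insert (by simp [ha])]
      have := sub_ne_zero.2 (hy i hi)
      simp only [hw]
      field_simp
      ring
    have hwi2 : ∀ i ∈ s, v i * ∏ j ∈ (insert a s).erase i, ((v i - 1 - v j) / (v i - v j))
        = v i * w i - w i - v a * (w i / (v i - v a)) := by
      intro i hi
      rw [hwi i hi]
      have := sub_ne_zero.2 (hy i hi)
      field_simp
      ring
    rw [Finset.sum_insert ha, Finset.sum_insert ha, Finset.sum_insert ha, Finset.sum_congr rfl hwi, Finset.sum_congr rfl hwi2,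
      Finset.erase_insert ha, Finset.card_insert_of_notMem ha, Finset.sum_range_succ]
    simp only [Finset.sum_sub_distrib, ← Finset.mul_sum]
    rw [pf]
    constructor
    · rw [i1]; push_cast; ring
    · rw [i2, i1]; ring

lemma up_aux (s : Finset ι) (v : ι → K) (hv : Set.InjOn v s) (q : K) (hq : ∀ i ∈ s, 1 - q * v i ≠ 0)
    (h0 : ∀ i ∈ s, v i ≠ 0) (j0 : ι) (hj0 : j0 ∈ s) (h1 : v j0 = 1) :
    ∑ i ∈ s, (1 - q) / (1 - q * v i) * ∏ j ∈ s.erase i, ((q * v i - v j) / (v i - v j)) = 1 := by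
  let P : Polynomial K := ∏ j ∈ s.erase j0, (Polynomial.C (v j) - Polynomial.C q * Polynomial.X)
  have hP : P.degree < s.card := by
    have hle : P.degree ≤ ((s.card - 1 : ℕ) : WithBot ℕ) := by
      refine (Polynomial.degree_prod_le _ _).trans ?_
      refine (Finset.sum_le_card_nsmul _ _ 1 ?_).trans ?_
      · intro j hj
        compute_degree
      · rw [Finset.card_erase_of_mem hj0]; simp
    refine lt_of_le_of_lt hle ?_
    have := Finset.card_pos.2 ⟨j0, hj0⟩
    exact_mod_cast (by omega : s.card - 1 < s.card)
  have h := lagr s v hv P hP 0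
  have e1 : ∀ z, P.eval z = ∏ j ∈ s.erase j0, (v j - q * z) := by
    intro z
    simp [P, Polynomial.eval_prod]
  have hN : ∏ j ∈ s.erase j0, v j ≠ 0 :=
    Finset.prod_ne_zero_iff.2 fun j hj => h0 j (Finset.mem_of_mem_erase hj)
  have hs : ∏ j ∈ s, v j = ∏ j ∈ s.erase j0, v j := by
    rw [← Finset.mul_prod_erase s _ hj0, h1, one_mul]
  rw [e1] at h
  simp only [mul_zero, sub_zero] at h
  have : ∏ j ∈ s.erase j0, v j = (∑ i ∈ s, (1 - q) / (1 - q * v i) * ∏ j ∈ s.erase i, ((q * v i - v j) / (v i - v j))) * ∏ j ∈ s.erase j0, v j := by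
    rw [Finset.sum_mul]
    conv_lhs => rw [h]
    refine Finset.sum_congr rfl fun i hi => ?_
    have e3 : (1 - q * v i) * P.eval (v i) = (1 - q) * v i * ∏ j ∈ s.erase i, (v j - q * v i) := by
      rw [e1]
      have := Finset.mul_prod_erase s (fun j => v j - q * v i) hj0
      simp only [h1] at this
      rw [this, ← Finset.mul_prod_erase s _ hi]
      ring
    have e4 : P.eval (v i) = (1 - q) / (1 - q * v i) * v i * ∏ j ∈ s.erase i, (v j - q * v i) := by
      have := hq i hi
      rw [div_mul_eq_mul_div, div_mul_eq_mul_div, eq_div_iff this, ← e3]; ring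
    rw [e4, ← hs, ← Finset.mul_prod_erase s _ hi]
    have e5 : (∏ j ∈ s.erase i, (v j - q * v i)) * ∏ j ∈ s.erase i, ((0 - v j) / (v i - v j))
       = (∏ j ∈ s.erase i, ((q * v i - v j) / (v i - v j))) * ∏ j ∈ s.erase i, v j := by
      rw [← Finset.prod_mul_distrib, ← Finset.prod_mul_distrib]
      exact Finset.prod_congr rfl fun j _ => by ring
    linear_combination ((1 - q) / (1 - q * v i) * v i) * e5
  exact (mul_right_cancel₀ hN (by rw [← this, one_mul]))

end alg

section vand
variable {K : Type*} [Field K] {k : ℕ}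

def vand (v : Fin k → K) : K := ∏ i, ∏ j ∈ Finset.Ioi i, (v i - v j)

lemma vand_ne (v : Fin k → K) (hv : Function.Injective v) : vand v ≠ 0 := by
  refine Finset.prod_ne_zero_iff.2 fun i _ => Finset.prod_ne_zero_iff.2 fun j hj => ?_
  have := Finset.mem_Ioi.1 hj
  exact sub_ne_zero.2 fun h => this.ne (hv h)

lemma vand_update (v : Fin k → K) (hv : Function.Injective v) (i : Fin k) (w : K) :
    vand (Function.update v i w) = vand v * ∏ j ∈ Finset.univ.erase i, ((w - v j) / (v i - v j)) := by
  rw [mul_comm, ← div_eq_iff (vand_ne v hv)]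
  unfold vand
  rw [← Finset.prod_div_distrib]
  simp only [← Finset.prod_div_distrib]
  set u : Fin k → K := fun j => (w - v j) / (v i - v j) with hu
  rw [← Finset.mul_prod_erase Finset.univ _ (Finset.mem_univ i)]
  have hA : ∏ j ∈ Finset.Ioi i, (Function.update v i w i - Function.update v i w j) / (v i - v j)
      = ∏ j ∈ Finset.univ.erase i, if i < j then u j else 1 := by
    rw [Finset.prod_ite, Finset.prod_const_one, mul_one]
    have : Finset.filter (fun j => i < j) (Finset.univ.erase i) = Finset.Ioi i := by
      ext j; simp; intro h; exact h.ne'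
    rw [this]
    refine Finset.prod_congr rfl fun j hj => ?_
    have := Finset.mem_Ioi.1 hj
    rw [Function.update_self, Function.update_of_ne this.ne']
  have hB : ∀ a ∈ Finset.univ.erase i, ∏ j ∈ Finset.Ioi a, (Function.update v i w a - Function.update v i w j) / (v a - v j)
      = if i < a then 1 else u a := by
    intro a ha
    have hai : a ≠ i := Finset.ne_of_mem_erase ha
    have hr : ∀ j ∈ Finset.Ioi a, j ≠ i → (Function.update v i w a - Function.update v i w j) / (v a - v j) = 1 := by
      intro j hj hji
      rw [Function.update_of_ne hai, Function.update_of_ne hji]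
      exact div_self (sub_ne_zero.2 fun h => (Finset.mem_Ioi.1 hj).ne (hv h))
    split_ifs with h
    · exact Finset.prod_eq_one fun j hj => hr j hj (h.trans (Finset.mem_Ioi.1 hj)).ne'
    · have hlt : a < i := lt_of_le_of_ne (not_lt.1 h) hai
      rw [Finset.prod_eq_single_of_mem i (Finset.mem_Ioi.2 hlt) hr, Function.update_of_ne hai, Function.update_self,
        hu, ← neg_sub, ← neg_sub (v i), neg_div_neg_eq]
  rw [hA, Finset.prod_congr rfl hB, ← Finset.prod_mul_distrib]
  exact Finset.prod_congr rfl fun j _ => by split_ifs <;> simp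
end vand

section qbasic
lemma qq_ne_zero : qq ≠ 0 := RatFunc.X_ne_zero

lemma qq_pow_inj : Function.Injective (fun n : ℕ => qq ^ n) := by
  intro a b h
  have h' : algebraMap (Polynomial ℚ) (RatFunc ℚ) (Polynomial.X ^ a)
      = algebraMap (Polynomial ℚ) (RatFunc ℚ) (Polynomial.X ^ b) := by
    simpa [qq] using h
  have h2 := RatFunc.algebraMap_injective ℚ h'
  simpa using congrArg Polynomial.natDegree h2

lemma qq_pow_ne_one {n : ℕ} (hn : n ≠ 0) : qq ^ n ≠ 1 := by
  intro h
  exact hn (qq_pow_inj (by simpa using h))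

lemma one_sub_qq_ne : 1 - qq ≠ 0 := by
  have := qq_pow_ne_one one_ne_zero
  rw [pow_one] at this
  exact sub_ne_zero.2 this.symm

lemma qInt_mul (n : ℕ) : (1 - qq) * qInt n = 1 - qq ^ n := by
  rw [qInt, mul_neg_geom_sum]

lemma qInt_ne {n : ℕ} (hn : n ≠ 0) : qInt n ≠ 0 := by
  intro h
  have := qInt_mul n
  rw [h, mul_zero] at this
  exact qq_pow_ne_one hn (sub_eq_zero.1 this.symm).symm

lemma qFact_ne (n : ℕ) : qFact n ≠ 0 :=
  Finset.prod_ne_zero_iff.2 fun _ _ => qInt_ne (Nat.succ_ne_zero _)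

lemma qFact_succ (n : ℕ) : qFact (n + 1) = qFact n * qInt (n + 1) := Finset.prod_range_succ _ _
end qbasic

section tuples
variable {k : ℕ}

/-- shifted parts -/
def shf (a : Fin k → ℕ) (i : Fin k) : ℕ := a i + (k - 1 - i)

lemma shf_strict (a : Fin k → ℕ) (ha : Antitone a) : StrictAnti (shf a) := by
  intro i j hij
  have := ha hij.le
  have h2 := j.2
  have h3 : (i : ℕ) < j := hij
  simp only [shf]; omega

def FF (a : Fin k → ℕ) : RatFunc ℚ :=
  vand (fun i => (shf a i : RatFunc ℚ)) / ∏ i, ((shf a i).factorial : RatFunc ℚ)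

def GG (a : Fin k → ℕ) : RatFunc ℚ :=
  vand (fun i => qq ^ (shf a i)) / ∏ i, qFact (shf a i)

lemma down_valid (a : Fin k → ℕ) (ha : Antitone a) (i : Fin k) (h0 : shf a i ≠ 0)
    (h1 : ∀ j, shf a j + 1 ≠ shf a i) : 0 < a i ∧ Antitone (a - Pi.single i 1) := by
  have hi := i.2
  have key : ∀ j, i < j → a j < a i := by
    intro j hij
    have hj := j.2
    have hij' : (i : ℕ) < j := hij
    let i' : Fin k := ⟨i + 1, by omega⟩
    have h2 := h1 i'
    have h3 : a i' ≤ a i := ha (by simp [i', Fin.le_def])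
    have h4 : a j ≤ a i' := ha (by simp only [i', Fin.le_def]; omega)
    simp only [shf, i'] at h2 h3 h4 ⊢
    omega
  have hpos : 0 < a i := by
    by_cases h : (i : ℕ) + 1 < k
    · exact (Nat.zero_le _).trans_lt (key ⟨i + 1, h⟩ (by simp [Fin.lt_def]))
    · simp only [shf] at h0; omega
  refine ⟨hpos, fun p r hpr => ?_⟩
  have hp := ha hpr
  simp only [Pi.sub_apply, Pi.single_apply]
  split_ifs with e1 e2 e2
  · omega
  · omega
  · subst e2
    have := key r (lt_of_le_of_ne hpr (Ne.symm e1))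
    omega
  · omega

lemma up_valid (a : Fin k → ℕ) (ha : Antitone a) (i : Fin k) 
    (h1 : ∀ j, shf a j ≠ shf a i + 1) : Antitone (a + Pi.single i 1) := by
  have hi := i.2
  have key : ∀ j, j < i → a i < a j := by
    intro j hij
    have hj := j.2
    have hij' : (j : ℕ) < i := hij
    let i' : Fin k := ⟨i - 1, by omega⟩
    have h2 := h1 i'
    have h3 : a i ≤ a i' := ha (by simp [i', Fin.le_def])
    have h4 : a i' ≤ a j := ha (by simp only [i', Fin.le_def]; omega)
    simp only [shf, i'] at h2 h3 h4 ⊢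
    omega
  intro p r hpr
  have hp := ha hpr
  simp only [Pi.add_apply, Pi.single_apply]
  split_ifs with e1 e2 e2
  · omega
  · subst e1
    have := key p (lt_of_le_of_ne hpr e2)
    omega
  · omega
  · omega

lemma shf_sub (a : Fin k → ℕ) (i : Fin k) (h : 0 < a i) :
    shf (a - Pi.single i 1) = Function.update (shf a) i (shf a i - 1) := by
  funext j
  by_cases hj : j = i
  · subst hj; simp [shf]; omega
  · simp [shf, hj]

lemma shf_add (a : Fin k → ℕ) (i : Fin k) :
    shf (a + Pi.single i 1) = Function.update (shf a) i (shf a i + 1) := by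
  funext j
  by_cases hj : j = i
  · subst hj; simp [shf]; omega
  · simp [shf, hj]

lemma prod_update_eq {K : Type*} [Field K] (φ : ℕ → K) (l : Fin k → ℕ) (i : Fin k) (t : ℕ) :
    φ (l i) * ∏ j, φ (Function.update l i t j) = φ t * ∏ j, φ (l j) := by
  rw [← Finset.mul_prod_erase Finset.univ _ (Finset.mem_univ i),
    ← Finset.mul_prod_erase Finset.univ (fun j => φ (l j)) (Finset.mem_univ i), Function.update_self]
  have : ∏ j ∈ Finset.univ.erase i, φ (Function.update l i t j) = ∏ j ∈ Finset.univ.erase i, φ (l j) :=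
    Finset.prod_congr rfl fun j hj => by rw [Function.update_of_ne (Finset.ne_of_mem_erase hj)]
  rw [this]; ring

lemma sum_shf (a : Fin k → ℕ) :
    ∑ i, (shf a i : RatFunc ℚ) = (∑ i, a i : ℕ) + ∑ t ∈ Finset.range k, (t : RatFunc ℚ) := by
  simp only [shf, Nat.cast_add, Finset.sum_add_distrib]
  push_cast
  congr 1
  rw [← Finset.sum_range_reflect]
  exact Fin.sum_univ_eq_sum_range (fun i => ((k - 1 - i : ℕ) : RatFunc ℚ)) k

open Classical in
lemma FF_down (a : Fin k → ℕ) (ha : Antitone a) :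
    ∑ i, (if 0 < a i ∧ Antitone (a - Pi.single i 1) then FF (a - Pi.single i 1) else 0)
      = ((∑ i, a i : ℕ) : RatFunc ℚ) * FF a := by
  have hinj : Function.Injective (fun i => (shf a i : RatFunc ℚ)) :=
    Nat.cast_injective.comp (shf_strict a ha).injective
  have h := (down_aux Finset.univ (fun i => (shf a i : RatFunc ℚ)) hinj.injOn).2
  rw [sum_shf, Finset.card_univ, Fintype.card_fin, add_sub_cancel_right] at h
  rw [← h, Finset.sum_mul]
  refine Finset.sum_congr rfl fun i _ => ?_
  split_ifs with hc
  · have hpos : shf a i ≠ 0 := by have := hc.1; simp only [shf]; omega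
    have hupd : (fun j => ((shf (a - Pi.single i 1) j : ℕ) : RatFunc ℚ))
        = Function.update (fun j => (shf a j : RatFunc ℚ)) i ((shf a i : RatFunc ℚ) - 1) := by
      rw [shf_sub a i hc.1]
      funext j
      by_cases hj : j = i
      · subst hj
        rw [Function.update_self, Function.update_self, Nat.cast_sub (by omega)]; simp
      · simp [hj]
    have hp := prod_update_eq (fun t => ((t.factorial : ℕ) : RatFunc ℚ)) (shf a) i (shf a i - 1)
    have hfac : ((shf a i).factorial : RatFunc ℚ) = (shf a i : RatFunc ℚ) * ((shf a i - 1).factorial : RatFunc ℚ) := by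
      exact_mod_cast (Nat.mul_factorial_pred hpos).symm
    rw [FF, hupd, vand_update _ hinj, shf_sub a i hc.1, FF]
    have n1 : ((shf a i - 1).factorial : RatFunc ℚ) ≠ 0 := Nat.cast_ne_zero.2 (Nat.factorial_ne_zero _)
    have n2 : (shf a i : RatFunc ℚ) ≠ 0 := Nat.cast_ne_zero.2 hpos
    have n3 : ∏ j, ((shf a j).factorial : RatFunc ℚ) ≠ 0 :=
      Finset.prod_ne_zero_iff.2 fun j _ => Nat.cast_ne_zero.2 (Nat.factorial_ne_zero _)
    have n4 : ∏ j, ((Function.update (shf a) i (shf a i - 1) j).factorial : RatFunc ℚ) ≠ 0 :=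
      Finset.prod_ne_zero_iff.2 fun j _ => Nat.cast_ne_zero.2 (Nat.factorial_ne_zero _)
    simp only [hfac] at hp
    have hp' : (shf a i : RatFunc ℚ) * ∏ j, ((Function.update (shf a) i (shf a i - 1) j).factorial : RatFunc ℚ)
        = ∏ j, ((shf a j).factorial : RatFunc ℚ) := mul_left_cancel₀ n1 (by rw [← hp]; ring)
    rw [← hp']
    field_simp
  · symm
    by_cases h0 : shf a i = 0
    · simp [h0]
    · have : ∃ j, shf a j + 1 = shf a i := by
        by_contra hne
        push Not at hne
        exact hc (down_valid a ha i h0 hne)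
      obtain ⟨j, hj⟩ := this
      have hji : j ≠ i := by rintro rfl; omega
      rw [Finset.prod_eq_zero (i := j) (by simp [hji])]
      · simp
      · rw [← hj]; simp

open Classical in
lemma GG_up (a : Fin k → ℕ) (ha : Antitone a) (hk : ∑ i, a i < k) :
    ∑ i, (if Antitone (a + Pi.single i 1) then GG (a + Pi.single i 1) else 0) = GG a := by
  have hinj : Function.Injective (fun i => qq ^ (shf a i)) :=
    qq_pow_inj.comp (shf_strict a ha).injective
  have hz : ∃ j, shf a j = 0 := by
    have : ∃ j, a j = 0 := by
      by_contra hne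
      push Not at hne
      have : ∑ i : Fin k, 1 ≤ ∑ i, a i := Finset.sum_le_sum fun i _ => Nat.one_le_iff_ne_zero.2 (hne i)
      simp at this; omega
    obtain ⟨j, hj⟩ := this
    have hjk := j.2
    refine ⟨⟨k - 1, by omega⟩, ?_⟩
    have : a ⟨k - 1, by omega⟩ ≤ a j := ha (by simp only [Fin.le_def]; omega)
    simp only [shf]; omega
  obtain ⟨j0, hj0⟩ := hz
  have h := up_aux Finset.univ (fun i => qq ^ (shf a i)) hinj.injOn qq
    (fun i _ => by
      rw [← pow_succ']
      exact sub_ne_zero.2 (qq_pow_ne_one (Nat.succ_ne_zero _)).symm)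
    (fun i _ => pow_ne_zero _ qq_ne_zero) j0 (Finset.mem_univ _) (by simp [hj0])
  conv_rhs => rw [← one_mul (GG a), ← h, Finset.sum_mul]
  refine Finset.sum_congr rfl fun i _ => ?_
  split_ifs with hc
  · have hupd : (fun j => qq ^ (shf (a + Pi.single i 1) j))
        = Function.update (fun j => qq ^ (shf a j)) i (qq * qq ^ (shf a i)) := by
      rw [shf_add a i]
      funext j
      by_cases hj : j = i
      · subst hj
        rw [Function.update_self, Function.update_self, pow_succ']
      · simp [hj]
    have hp := prod_update_eq qFact (shf a) i (shf a i + 1)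
    rw [qFact_succ, mul_assoc] at hp
    have hp' := mul_left_cancel₀ (qFact_ne _) hp
    rw [GG, hupd, vand_update _ hinj, shf_add a i, GG, hp', ← pow_succ', ← qInt_mul]
    have n1 : ∏ j, qFact (shf a j) ≠ 0 := Finset.prod_ne_zero_iff.2 fun j _ => qFact_ne _
    have n2 := qInt_ne (Nat.succ_ne_zero (shf a i))
    have n3 := one_sub_qq_ne
    simp only [Nat.succ_eq_add_one] at n2
    field_simp
  · symm
    have : ∃ j, shf a j = shf a i + 1 := by
      by_contra hne
      push Not at hne
      exact hc (up_valid a ha i hne)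
    obtain ⟨j, hj⟩ := this
    have hji : j ≠ i := by rintro rfl; omega
    rw [Finset.prod_eq_zero (i := j) (by simp [hji])]
    · simp
    · rw [hj, pow_succ']; simp

open Classical in
def TT (k m : ℕ) : Finset (Fin k → ℕ) := (Finset.piAntidiag Finset.univ m).filter Antitone

lemma mem_TT (m : ℕ) (a : Fin k → ℕ) : a ∈ TT k m ↔ ∑ i, a i = m ∧ Antitone a := by
  simp [TT, Finset.mem_piAntidiag]

lemma sum_step (m : ℕ) (hm : m < k) :
    ((m + 1 : ℕ) : RatFunc ℚ) * ∑ b ∈ TT k (m + 1), FF b * GG b = ∑ a ∈ TT k m, FF a * GG a := by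
  classical
  have h1 : ((m + 1 : ℕ) : RatFunc ℚ) * ∑ b ∈ TT k (m + 1), FF b * GG b
      = ∑ b ∈ TT k (m + 1), ∑ i, (if 0 < b i ∧ Antitone (b - Pi.single i 1) then FF (b - Pi.single i 1) * GG b else 0) := by
    rw [Finset.mul_sum]
    refine Finset.sum_congr rfl fun b hb => ?_
    obtain ⟨hs, hb⟩ := (mem_TT _ _).1 hb
    rw [← mul_assoc, ← hs, ← FF_down b hb, Finset.sum_mul]
    exact Finset.sum_congr rfl fun i _ => by split_ifs <;> simp
  have h2 : ∑ a ∈ TT k m, FF a * GG a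
      = ∑ a ∈ TT k m, ∑ i, (if Antitone (a + Pi.single i 1) then FF a * GG (a + Pi.single i 1) else 0) := by
    refine Finset.sum_congr rfl fun a ha => ?_
    obtain ⟨hs, ha⟩ := (mem_TT _ _).1 ha
    conv_lhs => rw [← GG_up a ha (by omega), Finset.mul_sum]
    exact Finset.sum_congr rfl fun i _ => by split_ifs <;> simp
  rw [h1, h2, Finset.sum_comm, Finset.sum_comm (s := TT k m)]
  refine Finset.sum_congr rfl fun i _ => ?_
  rw [← Finset.sum_filter, ← Finset.sum_filter]
  have hsa : ∀ a : Fin k → ℕ, a + Pi.single i 1 - Pi.single i 1 = a := fun a => by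
    funext j; simp
  have has : ∀ b : Fin k → ℕ, 0 < b i → b - Pi.single i 1 + Pi.single i 1 = b := fun b hb => by
    funext j
    by_cases hj : j = i
    · subst hj; simp; omega
    · simp [hj]
  have hsum : ∀ a : Fin k → ℕ, ∑ j, (a + Pi.single i 1 : Fin k → ℕ) j = ∑ j, a j + 1 := fun a => by
    simp [Finset.sum_add_distrib]
  refine Finset.sum_bij' (fun b _ => b - Pi.single i 1) (fun a _ => a + Pi.single i 1) ?_ ?_ ?_ ?_ ?_
  · intro b hb
    obtain ⟨hb1, hb2, hb3⟩ := Finset.mem_filter.1 hb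
    obtain ⟨hs, hb4⟩ := (mem_TT _ _).1 hb1
    refine Finset.mem_filter.2 ⟨(mem_TT _ _).2 ⟨?_, hb3⟩, ?_⟩
    · have := hsum (b - Pi.single i 1)
      rw [has b hb2] at this
      omega
    · rw [has b hb2]; exact hb4
  · intro a ha
    obtain ⟨ha1, ha2⟩ := Finset.mem_filter.1 ha
    obtain ⟨hs, ha4⟩ := (mem_TT _ _).1 ha1
    refine Finset.mem_filter.2 ⟨(mem_TT _ _).2 ⟨?_, ha2⟩, ?_, ?_⟩
    · rw [hsum, hs]
    · simp
    · rw [hsa]; exact ha4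
  · intro b hb
    exact has b (Finset.mem_filter.1 hb).2.1
  · intro a _
    exact hsa a
  · intro b hb
    rw [has b (Finset.mem_filter.1 hb).2.1]

lemma sum_total (m : ℕ) (hm : m ≤ k) :
    (m.factorial : RatFunc ℚ) * ∑ b ∈ TT k m, FF b * GG b = FF (0 : Fin k → ℕ) * GG (0 : Fin k → ℕ) := by
  induction m with
  | zero =>
    have : TT k 0 = {0} := by
      ext a
      rw [mem_TT, Finset.mem_singleton]
      constructor
      · rintro ⟨h, _⟩
        funext j
        simpa using (Finset.sum_eq_zero_iff.1 h) j (Finset.mem_univ _)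
      · rintro rfl
        exact ⟨by simp, fun _ _ _ => le_rfl⟩
    simp [this]
  | succ m ih =>
    rw [← ih (by omega), ← sum_step m (by omega), Nat.factorial_succ]
    push_cast; ring
end tuples

section hooks

lemma hook_row (μ : YoungDiagram) (k : ℕ) (hk : μ.colLen 0 ≤ k) (i : ℕ) (hi : i < k) (φ : ℕ → RatFunc ℚ) :
    (∏ j ∈ Finset.range (μ.rowLen i), φ (hookLength μ (i, j))) *
      ∏ r ∈ Finset.Ioo i k, φ ((μ.rowLen i + (k - 1 - i)) - (μ.rowLen r + (k - 1 - r)))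
    = ∏ t ∈ Finset.range (μ.rowLen i + (k - 1 - i)), φ (t + 1) := by
  classical
  set R := μ.rowLen i with hR
  have hcr : ∀ r j, j < μ.rowLen r ↔ r < μ.colLen j := fun r j => by
    rw [← YoungDiagram.mem_iff_lt_rowLen, YoungDiagram.mem_iff_lt_colLen]
  have hck : ∀ j, μ.colLen j ≤ k := fun j => (μ.colLen_anti 0 j (Nat.zero_le _)).trans hk
  set f1 : ℕ → ℕ := fun j => hookLength μ (i, j) with hf1
  set f2 : ℕ → ℕ := fun r => (R + (k - 1 - i)) - (μ.rowLen r + (k - 1 - r)) with hf2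
  have e1 : ∀ j, f1 j = R + μ.colLen j - (i + j + 1) := fun j => rfl
  have inj1 : Set.InjOn f1 (Finset.range R) := by
    intro x hx y hy hxy
    simp only [Finset.coe_range, Set.mem_Iio] at hx hy
    have a1 := (hcr i x).1 hx
    have a2 := (hcr i y).1 hy
    rw [e1, e1] at hxy
    rcases le_total x y with h | h
    · have := μ.colLen_anti x y h
      omega
    · have := μ.colLen_anti y x h
      omega
  have inj2 : Set.InjOn f2 (Finset.Ioo i k) := by
    intro x hx y hy hxy
    simp only [Finset.coe_Ioo, Set.mem_Ioo] at hx hy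
    simp only [hf2] at hxy
    have b1 := μ.rowLen_anti i x (by omega)
    have b2 := μ.rowLen_anti i y (by omega)
    rcases le_total x y with h | h
    · have := μ.rowLen_anti x y h
      omega
    · have := μ.rowLen_anti y x h
      omega
  have disj : Disjoint ((Finset.range R).image f1) ((Finset.Ioo i k).image f2) := by
    rw [Finset.disjoint_left]
    intro z hz1 hz2
    obtain ⟨j, hj, rfl⟩ := Finset.mem_image.1 hz1
    obtain ⟨r, hr, hrz⟩ := Finset.mem_image.1 hz2
    rw [Finset.mem_range] at hj
    rw [Finset.mem_Ioo] at hr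
    have a1 := (hcr i j).1 hj
    have a2 := hcr r j
    have b1 := μ.rowLen_anti i r (by omega)
    rw [e1] at hrz
    simp only [hf2] at hrz
    by_cases h : j < μ.rowLen r
    · have := a2.1 h
      omega
    · have : ¬ r < μ.colLen j := fun h' => h (a2.2 h')
      omega
  have hun : (Finset.range R).image f1 ∪ (Finset.Ioo i k).image f2
      = (Finset.range (R + (k - 1 - i))).image (· + 1) := by
    apply Finset.eq_of_subset_of_card_le
    · intro z hz
      rw [Finset.mem_image]
      refine ⟨z - 1, ?_⟩
      rw [Finset.mem_range]
      rcases Finset.mem_union.1 hz with hz | hz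
      · obtain ⟨j, hj, rfl⟩ := Finset.mem_image.1 hz
        rw [Finset.mem_range] at hj
        have a1 := (hcr i j).1 hj
        have := hck j
        rw [e1]; omega
      · obtain ⟨r, hr, rfl⟩ := Finset.mem_image.1 hz
        rw [Finset.mem_Ioo] at hr
        have b1 := μ.rowLen_anti i r (by omega)
        simp only [hf2]; omega
    · rw [Finset.card_union_of_disjoint disj, Finset.card_image_of_injOn inj1, Finset.card_image_of_injOn inj2]
      refine Finset.card_image_le.trans ?_
      simp
      omega
  have p1 := Finset.prod_image (f := φ) inj1
  have p2 := Finset.prod_image (f := φ) inj2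
  have p3 := Finset.prod_image (f := φ) (s := Finset.range (R + (k - 1 - i))) (g := (· + 1))
    (fun x _ y _ h => by simpa using h)
  rw [← p1, ← p2, ← p3, ← hun, Finset.prod_union disj]

/-- tuple of row lengths -/
def tup (k : ℕ) (μ : YoungDiagram) (i : Fin k) : ℕ := μ.rowLen i

lemma tup_anti (k : ℕ) (μ : YoungDiagram) : Antitone (tup k μ) := fun i j h => μ.rowLen_anti i j h

lemma cells_iff (μ : YoungDiagram) (k : ℕ) (hk : μ.colLen 0 ≤ k) (p : ℕ × ℕ) :
    p ∈ μ.cells ↔ p.1 ∈ Finset.range k ∧ p.2 ∈ Finset.range (μ.rowLen p.1) := by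
  obtain ⟨i, j⟩ := p
  rw [YoungDiagram.mem_cells, Finset.mem_range, Finset.mem_range, YoungDiagram.mem_iff_lt_rowLen]
  refine ⟨fun h => ⟨?_, h⟩, fun h => h.2⟩
  have h1 := YoungDiagram.mem_iff_lt_colLen.1 (YoungDiagram.mem_iff_lt_rowLen.2 h)
  have := μ.colLen_anti 0 j (Nat.zero_le _)
  omega

lemma hook_all (μ : YoungDiagram) (k : ℕ) (hk : μ.colLen 0 ≤ k) (φ : ℕ → RatFunc ℚ) :
    (∏ c ∈ μ.cells, φ (hookLength μ c)) *
      ∏ i : Fin k, ∏ j ∈ Finset.Ioi i, φ (shf (tup k μ) i - shf (tup k μ) j)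
    = ∏ i : Fin k, ∏ t ∈ Finset.range (shf (tup k μ) i), φ (t + 1) := by
  rw [Finset.prod_finset_product μ.cells (Finset.range k) (fun i => Finset.range (μ.rowLen i))
    (cells_iff μ k hk), ← Fin.prod_univ_eq_prod_range (fun i => ∏ j ∈ Finset.range (μ.rowLen i), φ (hookLength μ (i, j))) k,
    ← Finset.prod_mul_distrib]
  refine Finset.prod_congr rfl fun i _ => ?_
  rw [shf, tup, ← hook_row μ k hk i i.2 φ]
  congr 1
  refine Finset.prod_bij (fun j _ => (j : ℕ)) ?_ ?_ ?_ ?_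
  · intro j hj
    have := Finset.mem_Ioi.1 hj
    exact Finset.mem_Ioo.2 ⟨this, j.2⟩
  · intro x _ y _ h
    exact Fin.ext h
  · intro r hr
    have := Finset.mem_Ioo.1 hr
    exact ⟨⟨r, this.2⟩, Finset.mem_Ioi.2 this.1, rfl⟩
  · intro j _
    rfl

lemma hook_pos (μ : YoungDiagram) (c : ℕ × ℕ) (hc : c ∈ μ.cells) : hookLength μ c ≠ 0 := by
  obtain ⟨i, j⟩ := c
  rw [YoungDiagram.mem_cells] at hc
  have h1 := YoungDiagram.mem_iff_lt_rowLen.1 hc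
  have h2 := YoungDiagram.mem_iff_lt_colLen.1 hc
  simp only [hookLength]; omega

lemma FF_tup (μ : YoungDiagram) (k : ℕ) (hk : μ.colLen 0 ≤ k) :
    FF (tup k μ) = 1 / ∏ c ∈ μ.cells, (hookLength μ c : RatFunc ℚ) := by
  have h := hook_all μ k hk (fun t => (t : RatFunc ℚ))
  have hv : ∏ i : Fin k, ∏ j ∈ Finset.Ioi i, ((shf (tup k μ) i - shf (tup k μ) j : ℕ) : RatFunc ℚ)
      = vand (fun i => (shf (tup k μ) i : RatFunc ℚ)) := by
    refine Finset.prod_congr rfl fun i _ => Finset.prod_congr rfl fun j hj => ?_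
    exact Nat.cast_sub (shf_strict _ (tup_anti k μ) (Finset.mem_Ioi.1 hj)).le
  have hf : ∀ n : ℕ, ∏ t ∈ Finset.range n, ((t + 1 : ℕ) : RatFunc ℚ) = (n.factorial : RatFunc ℚ) := fun n => by
    rw [← Finset.prod_range_add_one_eq_factorial]; push_cast; rfl
  simp only [hf] at h
  rw [hv] at h
  have n1 : ∏ c ∈ μ.cells, (hookLength μ c : RatFunc ℚ) ≠ 0 :=
    Finset.prod_ne_zero_iff.2 fun c hc => Nat.cast_ne_zero.2 (hook_pos μ c hc)
  have n3 : ∏ j, ((shf (tup k μ) j).factorial : RatFunc ℚ) ≠ 0 :=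
    Finset.prod_ne_zero_iff.2 fun j _ => Nat.cast_ne_zero.2 (Nat.factorial_ne_zero _)
  rw [FF, div_eq_div_iff n3 n1, ← h]; ring

def CC (k : ℕ) : RatFunc ℚ := ∏ i : Fin k, ∏ j ∈ Finset.Ioi i, (qq ^ (k - 1 - (j : ℕ)) * (qq - 1))

lemma CC_ne (k : ℕ) : CC k ≠ 0 := by
  refine Finset.prod_ne_zero_iff.2 fun i _ => Finset.prod_ne_zero_iff.2 fun j _ => ?_
  refine mul_ne_zero (pow_ne_zero _ qq_ne_zero) ?_
  rw [← neg_sub]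
  exact neg_ne_zero.2 one_sub_qq_ne

lemma nStat_eq (μ : YoungDiagram) (k : ℕ) (hk : μ.colLen 0 ≤ k) :
    ∏ i : Fin k, ∏ j ∈ Finset.Ioi i, qq ^ (tup k μ j) = qq ^ nStat μ := by
  rw [nStat, Finset.sum_finset_product μ.cells (Finset.range k) (fun i => Finset.range (μ.rowLen i))
    (cells_iff μ k hk)]
  rw [Finset.prod_comm' (t' := Finset.univ) (s' := fun j => Finset.Iio j) (by simp)]
  simp only [Finset.prod_const, Fin.card_Iio, ← pow_mul, Finset.prod_pow_eq_pow_sum]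
  congr 1
  simp only [Finset.sum_const, Finset.card_range, smul_eq_mul]
  exact Fin.sum_univ_eq_sum_range (fun i => μ.rowLen i * i) k

lemma GG_tup (μ : YoungDiagram) (k : ℕ) (hk : μ.colLen 0 ≤ k) :
    GG (tup k μ) = CC k * qq ^ nStat μ / ∏ c ∈ μ.cells, qInt (hookLength μ c) := by
  have h := hook_all μ k hk qInt
  have hv : vand (fun i => qq ^ (shf (tup k μ) i)) = CC k * qq ^ nStat μ *
     ∏ i : Fin k, ∏ j ∈ Finset.Ioi i, qInt (shf (tup k μ) i - shf (tup k μ) j) := by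
    rw [← nStat_eq μ k hk, CC, vand]
    simp only [← Finset.prod_mul_distrib]
    refine Finset.prod_congr rfl fun i _ => Finset.prod_congr rfl fun j hj => ?_
    have hlt := (shf_strict _ (tup_anti k μ) (Finset.mem_Ioi.1 hj)).le
    obtain ⟨d, hd⟩ := Nat.exists_eq_add_of_le hlt
    have hq := qInt_mul d
    rw [hd, Nat.add_sub_cancel_left, pow_add]
    have : qq ^ shf (tup k μ) j = qq ^ (tup k μ j) * qq ^ (k - 1 - (j : ℕ)) := by rw [shf, pow_add]
    rw [this]
    linear_combination (qq ^ (tup k μ j) * qq ^ (k - 1 - (j : ℕ))) * hq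
  have n1 : ∏ c ∈ μ.cells, qInt (hookLength μ c) ≠ 0 :=
    Finset.prod_ne_zero_iff.2 fun c hc => qInt_ne (hook_pos μ c hc)
  have n3 : ∏ j, qFact (shf (tup k μ) j) ≠ 0 :=
    Finset.prod_ne_zero_iff.2 fun j _ => qFact_ne _
  have h' : _ = ∏ j, qFact (shf (tup k μ) j) := h
  rw [GG, div_eq_div_iff n3 n1, ← h', hv]; ring

lemma base_val (k : ℕ) : FF (0 : Fin k → ℕ) * GG (0 : Fin k → ℕ) = CC k := by
  have hr : ∀ i, (⊥ : YoungDiagram).rowLen i = 0 := fun i => by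
    by_contra h
    exact YoungDiagram.notMem_bot (i, 0) (YoungDiagram.mem_iff_lt_rowLen.2 (Nat.pos_of_ne_zero h))
  have hc : (⊥ : YoungDiagram).colLen 0 ≤ k := by
    by_contra h
    exact YoungDiagram.notMem_bot (0, 0) (YoungDiagram.mem_iff_lt_colLen.2 (by omega))
  have h0 : tup k ⊥ = 0 := funext fun i => hr i
  rw [← h0, FF_tup _ _ hc, GG_tup _ _ hc]
  simp [nStat]

lemma colLen_le_card (μ : YoungDiagram) : μ.colLen 0 ≤ μ.card := by
  rw [YoungDiagram.colLen_eq_card]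
  exact Finset.card_le_card (Finset.filter_subset _ _)

lemma card_eq_sum (μ : YoungDiagram) (k : ℕ) (hk : μ.colLen 0 ≤ k) : μ.card = ∑ i, tup k μ i := by
  rw [YoungDiagram.card, Finset.card_eq_sum_ones, Finset.sum_finset_product μ.cells (Finset.range k) (fun i => Finset.range (μ.rowLen i))
    (cells_iff μ k hk)]
  simp only [Finset.sum_const, Finset.card_range, smul_eq_mul, mul_one]
  exact (Fin.sum_univ_eq_sum_range (fun i => μ.rowLen i) k).symm

lemma tup_surj (k : ℕ) (a : Fin k → ℕ) (ha : Antitone a) :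
    ∃ μ : YoungDiagram, μ.colLen 0 ≤ k ∧ tup k μ = a := by
  classical
  let μ : YoungDiagram :=
    { cells := Finset.univ.biUnion fun i : Fin k => (Finset.range (a i)).image fun j => ((i : ℕ), j)
      isLowerSet := by
        rintro ⟨x1, x2⟩ ⟨y1, y2⟩ hle hx
        have hle1 : y1 ≤ x1 := hle.1
        have hle2 : y2 ≤ x2 := hle.2
        simp only [Finset.coe_biUnion, Finset.coe_univ, Set.mem_univ, Set.iUnion_true, Set.mem_iUnion,
          Finset.coe_image, Set.mem_image, Finset.coe_range, Set.mem_Iio, Prod.mk.injEq] at hx ⊢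
        obtain ⟨i, j, hj, rfl, rfl⟩ := hx
        refine ⟨⟨y1, by omega⟩, y2, ?_, rfl, rfl⟩
        have := ha (show (⟨y1, by omega⟩ : Fin k) ≤ i from hle1)
        omega }
  have hmem : ∀ x y, (x, y) ∈ μ ↔ ∃ h : x < k, y < a ⟨x, h⟩ := by
    intro x y
    rw [← YoungDiagram.mem_cells]
    simp only [μ, Finset.mem_biUnion, Finset.mem_univ, true_and, Finset.mem_image, Finset.mem_range, Prod.mk.injEq]
    constructor
    · rintro ⟨i, j, hj, rfl, rfl⟩
      exact ⟨i.2, hj⟩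
    · rintro ⟨h, hy⟩
      exact ⟨⟨x, h⟩, y, hy, rfl, rfl⟩
  refine ⟨μ, ?_, ?_⟩
  · by_contra h
    obtain ⟨h', _⟩ := (hmem k 0).1 (YoungDiagram.mem_iff_lt_colLen.2 (by omega))
    omega
  · funext i
    have h1 : ∀ y, y < μ.rowLen i ↔ y < a i := fun y => by
      rw [← YoungDiagram.mem_iff_lt_rowLen, hmem]
      exact ⟨fun ⟨_, h⟩ => h, fun h => ⟨i.2, h⟩⟩
    have h2 := h1 (a i)
    have h3 := h1 (μ.rowLen i)
    simp only [tup]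
    omega

lemma tup_inj (k : ℕ) (μ ν : YoungDiagram) (hμ : μ.colLen 0 ≤ k) (hν : ν.colLen 0 ≤ k)
    (h : tup k μ = tup k ν) : μ = ν := by
  ext p
  rw [cells_iff μ k hμ, cells_iff ν k hν]
  refine and_congr_right fun hp => ?_
  rw [Finset.mem_range] at hp
  have := congrFun h ⟨p.1, hp⟩
  simp only [tup] at this
  rw [this]
end hooks

/-- The graded-dimension identity for the coinvariant algebra:
`Σ_{μ ⊢ n} f_μ · q^{n(μ)} · [n]_q! / ∏_{(i,j)∈μ} [h_{ij}]_q = [n]_q!`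
as polynomials (rational functions) in `q`. -/
theorem sum_fmu_qhook_eq_qfact (n : ℕ) (hn : 0 < n) :
    ∑ᶠ μ : { μ : YoungDiagram // μ.card = n },
        fSYT n μ.1 * qq ^ nStat μ.1 * qFact n / ∏ c ∈ μ.1.cells, qInt (hookLength μ.1 c) =
      qFact n := by
  have hcol : ∀ μ : { μ : YoungDiagram // μ.card = n }, μ.1.colLen 0 ≤ n := fun μ =>
    (colLen_le_card μ.1).trans μ.2.le
  let e : { μ : YoungDiagram // μ.card = n } → { a : Fin n → ℕ // a ∈ TT n n } := fun μ =>
    ⟨tup n μ.1, (mem_TT _ _).2 ⟨by rw [← card_eq_sum μ.1 n (hcol μ), μ.2], tup_anti _ _⟩⟩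
  have he : Function.Bijective e := by
    constructor
    · intro μ ν h
      exact Subtype.ext (tup_inj n μ.1 ν.1 (hcol μ) (hcol ν) (congrArg Subtype.val h))
    · rintro ⟨a, ha⟩
      obtain ⟨hs, haa⟩ := (mem_TT _ _).1 ha
      obtain ⟨μ, hμ, rfl⟩ := tup_surj n a haa
      exact ⟨⟨μ, by rw [card_eq_sum μ n hμ, hs]⟩, rfl⟩
  rw [finsum_eq_of_bijective e he
    (g := fun a => (n.factorial : RatFunc ℚ) * (FF a.1 * GG a.1) * (qFact n / CC n))]
  · rw [finsum_eq_sum_of_fintype, Finset.sum_coe_sort (TT n n)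
      (fun a => (n.factorial : RatFunc ℚ) * (FF a * GG a) * (qFact n / CC n)), ← Finset.sum_mul,
      ← Finset.mul_sum, sum_total n le_rfl, base_val]
    exact mul_div_cancel₀ _ (CC_ne n)
  · intro μ
    simp only [e]
    rw [FF_tup _ _ (hcol μ), GG_tup _ _ (hcol μ), fSYT]
    have := CC_ne n
    field_simp

end
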